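/- Let G be a finite simple graph on n vertices whose complement is not bipartite, and let f : V(G) → ZMod n be a bijection under which every closed neighborhood N[v] is an arc. For each vertex v write f(N[v]) = [v⁻, v⁺] (a proper nonempty arc, since no vertex is universal), and set N⁻[v] = {u ∈ N[v] : f(u) lies in the arc [v⁻, f(v)]} and N⁺[v] = {u ∈ N[v] : f(u) lies in the arc [f(v), v⁺]}. Then: (1) for all vertices u, v, u ∈ N⁻[v] if and only if v ∈ N⁺[u]; (2) for every v, both N⁻[v] and N⁺[v] are cliques of G. -/

import Mathlib

/-!
Since `f(N[v])` is a proper arc, `u ∈ N⁻[v]` says exactly that the whole arc `[u, v]` lies in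
`N[v]`, and `u ∈ N⁺[v]` that `[v, u]` lies in `N[v]`. Replacing `f` by `-f` reverses all arcs and so
exchanges `N⁻` and `N⁺`.

Suppose that `u ∈ N⁻[v]` but `v ∉ N⁺[u]`. Then `[u, v] ⊆ N[v]`, and `[v, u] ⊆ N[u]` because `N[u]`
is an arc containing `u` and `v`. Hence every `w ∈ [u, v)` is adjacent or equal to `v` and `N[w]`
contains `[w, v]` or `[v, w]`; likewise for `w ∈ [v, u)` and `u`. The `w ∈ [u, v)` with
`[v, w] ⊆ N[w]` and the `w ∈ [v, u)` with `[w, u] ⊆ N[w]` together form a clique, and so do the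
vertices obtained by exchanging `u` and `v`. These two cliques cover `G`, whose complement is
therefore bipartite. This proves (1), the converse implication being its reflection.

For (2), let `u, w ∈ N⁺[v]` with `u ∈ [v, w]`. By (1), `v ∈ N⁻[w]`, so `u ∈ [v, w] ⊆ N[w]`.
-/

open Set

/-- The closed neighborhood of a vertex: the vertex together with its neighbors. -/
def ClosedNbhd {V : Type*} (G : SimpleGraph V) (v : V) : Set V :=
  {u | u = v ∨ G.Adj u v}

/-- `S` is an interval (order-convex set) with respect to the order relation `r`. -/
def IsIntervalWrt {α : Type*} (r : α → α → Prop) (S : Set α) : Prop :=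
  ∀ x y z, r x y → r y z → x ∈ S → z ∈ S → y ∈ S

/-- A family of hyperedges forms an interval hypergraph: some linear order on the
vertices makes every hyperedge an interval (a set of consecutive elements). -/
def IsIntervalHypergraph {α ι : Type*} (H : ι → Set α) : Prop :=
  ∃ r : α → α → Prop, IsLinearOrder α r ∧ ∀ i, IsIntervalWrt r (H i)

/-- `S ⊆ ZMod n` is an arc: a set of (at most `n`) circularly consecutive points. -/
def IsArc (n : ℕ) (S : Set (ZMod n)) : Prop :=
  ∃ a : ZMod n, ∃ k : ℕ, k ≤ n ∧ S = {x | ∃ i : ℕ, i < k ∧ x = a + (i : ZMod n)}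

/-- Arcs `A` and `B` share their start point: some point is a start point of both. -/
def SharesStart (n : ℕ) (A B : Set (ZMod n)) : Prop :=
  ∃ a, a ∈ A ∧ a - 1 ∉ A ∧ a ∈ B ∧ a - 1 ∉ B

/-- Arcs `A` and `B` share their end point: some point is an end point of both. -/
def SharesEnd (n : ℕ) (A B : Set (ZMod n)) : Prop :=
  ∃ a, a ∈ A ∧ a + 1 ∉ A ∧ a ∈ B ∧ a + 1 ∉ B

/-- `G` is a proper interval graph: it has an intersection model consisting of
nonempty integer intervals that are pairwise incomparable under inclusion. -/
def IsProperIntervalGraph {V : Type*} (G : SimpleGraph V) : Prop :=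
  ∃ l : V → Set ℤ,
    (∀ v, ∃ a b : ℤ, a ≤ b ∧ l v = Set.Icc a b) ∧
    (∀ u v, u ≠ v → ¬ l u ⊆ l v) ∧
    (∀ u v, u ≠ v → (G.Adj u v ↔ (l u ∩ l v).Nonempty))

/-- `G` is a circular-arc graph: it has an intersection model consisting of
nonempty arcs of some circle `ZMod n`. -/
def IsCAGraph {V : Type*} (G : SimpleGraph V) : Prop :=
  ∃ n : ℕ, 0 < n ∧ ∃ l : V → Set (ZMod n),
    Function.Injective l ∧
    (∀ v, (l v).Nonempty ∧ IsArc n (l v)) ∧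
    (∀ u v, u ≠ v → (G.Adj u v ↔ (l u ∩ l v).Nonempty))

/-- `G` is a proper circular-arc graph: it has an intersection model consisting of
nonempty arcs of some circle `ZMod n`, pairwise incomparable under inclusion. -/
def IsPCAGraph {V : Type*} (G : SimpleGraph V) : Prop :=
  ∃ n : ℕ, 0 < n ∧ ∃ l : V → Set (ZMod n),
    Function.Injective l ∧
    (∀ v, (l v).Nonempty ∧ IsArc n (l v)) ∧
    (∀ u v, u ≠ v → ¬ l u ⊆ l v) ∧
    (∀ u v, u ≠ v → (G.Adj u v ↔ (l u ∩ l v).Nonempty))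

/-- `G` is bipartite: the vertex set splits into two independent sets. -/
def IsBipartite {V : Type*} (G : SimpleGraph V) : Prop :=
  ∃ U : Set V, (∀ u ∈ U, ∀ v ∈ U, ¬ G.Adj u v) ∧ (∀ u ∉ U, ∀ v ∉ U, ¬ G.Adj u v)

/-- The arc of `ZMod n` running clockwise from `x` to `y`. -/
def CircArc (n : ℕ) (x y : ZMod n) : Set (ZMod n) :=
  {z | (z - x).val ≤ (y - x).val}


section CircArc

/-- The half-open arc of `ZMod n` running clockwise from `x` to `y`, without `y`; it is empty when
`x = y`. It is used to split the circle at two points. -/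
def CircIco (n : ℕ) (x y : ZMod n) : Set (ZMod n) :=
  {z | (z - x).val < (y - x).val}

variable {n : ℕ} {x y z w : ZMod n}

lemma mem_circArc : z ∈ CircArc n x y ↔ (z - x).val ≤ (y - x).val :=
  Iff.rfl

lemma mem_circIco : z ∈ CircIco n x y ↔ (z - x).val < (y - x).val :=
  Iff.rfl

lemma circIco_subset_circArc : CircIco n x y ⊆ CircArc n x y :=
  fun _ hz ↦ mem_circArc.2 (mem_circIco.1 hz).le

lemma right_mem_circArc : y ∈ CircArc n x y :=
  mem_circArc.2 le_rfl

lemma left_mem_circArc : x ∈ CircArc n x y := by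
  simp [mem_circArc]

lemma circArc_subset_circArc_right (hz : z ∈ CircArc n x y) : CircArc n x z ⊆ CircArc n x y :=
  fun _ hw ↦ mem_circArc.2 ((mem_circArc.1 hw).trans (mem_circArc.1 hz))

variable [NeZero n]

lemma val_sub_add_val_sub (x y z : ZMod n) :
    (y - x).val + (z - y).val = (z - x).val ∨ (y - x).val + (z - y).val = (z - x).val + n := by
  rw [← sub_add_sub_cancel' y x z]
  rcases lt_or_ge ((y - x).val + (z - y).val) n with h | h
  · exact .inl (ZMod.val_add_of_lt h).symm
  · exact .inr (ZMod.val_add_val_of_le h)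

lemma val_sub_add_val_sub_swap (hxy : x ≠ y) : (y - x).val + (x - y).val = n := by
  rw [← neg_sub y x, ZMod.neg_val, if_neg (sub_ne_zero.2 hxy.symm)]
  exact Nat.add_sub_of_le (ZMod.val_lt _).le

lemma mem_circArc_iff_add_eq :
    z ∈ CircArc n x y ↔ (z - x).val + (y - z).val = (y - x).val := by
  have := val_sub_add_val_sub x z y
  have := ZMod.val_lt (y - z)
  rw [mem_circArc]
  omega

lemma neg_mem_circArc_neg : -z ∈ CircArc n (-x) (-y) ↔ z ∈ CircArc n y x := by
  simp only [mem_circArc_iff_add_eq, neg_sub_neg, add_comm]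

lemma circArc_subset_circArc_left (hz : z ∈ CircArc n x y) : CircArc n z y ⊆ CircArc n x y := by
  intro w hw
  rw [mem_circArc_iff_add_eq] at *
  have := val_sub_add_val_sub x w y
  have := val_sub_add_val_sub x z w
  omega

lemma mem_circArc_of_mem_circArc_left (hz : z ∈ CircArc n x y) (hw : w ∈ CircArc n x z) :
    z ∈ CircArc n w y := by
  rw [mem_circArc_iff_add_eq] at *
  have := val_sub_add_val_sub x w y
  have := val_sub_add_val_sub w z y
  omega

lemma left_mem_circArc_of_mem_circIco (hz : z ∈ CircIco n x y) : x ∈ CircArc n y z := by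
  have hxy : x ≠ y := by
    rintro rfl
    simp [mem_circIco] at hz
  have := val_sub_add_val_sub_swap hxy
  have := val_sub_add_val_sub x y z
  rw [mem_circIco] at hz
  rw [mem_circArc]
  omega

lemma mem_circIco_or_mem_circIco (hxy : x ≠ y) (z : ZMod n) :
    z ∈ CircIco n x y ∨ z ∈ CircIco n y x := by
  have := val_sub_add_val_sub_swap hxy
  have := val_sub_add_val_sub x y z
  have := ZMod.val_lt (z - x)
  have := ZMod.val_lt (z - y)
  rw [mem_circIco, mem_circIco]
  omega

lemma val_neg_one_add_one (n : ℕ) [NeZero n] : (-1 : ZMod n).val + 1 = n := by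
  obtain ⟨m, rfl⟩ := Nat.exists_eq_succ_of_ne_zero (NeZero.ne n)
  rw [ZMod.val_neg_one]

lemma sub_one_mem_circArc (hz : z ∉ CircArc n x y) : x - 1 ∈ CircArc n z y := by
  have := val_sub_add_val_sub x z (x - 1)
  have := val_sub_add_val_sub x z y
  have := val_neg_one_add_one n
  have := ZMod.val_lt (z - x)
  have := ZMod.val_lt (x - 1 - z)
  rw [sub_sub_cancel_left] at *
  rw [mem_circArc] at *
  omega

end CircArc

section ArcConnected

variable {V : Type*} {n : ℕ} {f : V → ZMod n} {S : Set V} {u v w : V}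

/-- The vertices met when running clockwise from `u` to `v`, for vertices placed on the circle
`ZMod n` by `f`. -/
def VertexArc (f : V → ZMod n) (u v : V) : Set V :=
  f ⁻¹' CircArc n (f u) (f v)

/-- The order-theoretic content of being an arc: any two vertices of `S` are joined inside `S` by
one of the two arcs between them. Unlike `IsArc`, this is visibly invariant under reflection. -/
def ArcConnected (f : V → ZMod n) (S : Set V) : Prop :=
  ∀ u ∈ S, ∀ v ∈ S, VertexArc f u v ⊆ S ∨ VertexArc f v u ⊆ S

lemma left_mem_vertexArc : u ∈ VertexArc f u v :=
  left_mem_circArc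

lemma right_mem_vertexArc : v ∈ VertexArc f u v :=
  right_mem_circArc

lemma mem_vertexArc_or_mem_vertexArc (f : V → ZMod n) (u v w : V) :
    u ∈ VertexArc f v w ∨ w ∈ VertexArc f v u :=
  le_total (f u - f v).val (f w - f v).val

variable [NeZero n]

lemma vertexArc_neg (f : V → ZMod n) (u v : V) : VertexArc (-f) u v = VertexArc f v u :=
  Set.ext fun _ ↦ neg_mem_circArc_neg

lemma ArcConnected.neg (hS : ArcConnected f S) : ArcConnected (-f) S := by
  intro u hu v hv
  simpa only [vertexArc_neg] using hS v hv u hu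

lemma IsArc.arcConnected_preimage {T : Set (ZMod n)} (hT : IsArc n T) (f : V → ZMod n) :
    ArcConnected f (f ⁻¹' T) := by
  obtain ⟨a, k, hk, rfl⟩ := hT
  have mem_iff (x : ZMod n) : (∃ i : ℕ, i < k ∧ x = a + i) ↔ (x - a).val < k := by
    constructor
    · rintro ⟨i, hi, rfl⟩
      rwa [add_sub_cancel_left, ZMod.val_cast_of_lt (hi.trans_le hk)]
    · exact fun hx ↦ ⟨_, hx, by simp⟩
  have subset_of_mem {x y : ZMod n} (hx : x ∈ CircArc n a y) (hy : (y - a).val < k) :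
      CircArc n x y ⊆ {z | (z - a).val < k} :=
    fun z hz ↦ (mem_circArc.1 (circArc_subset_circArc_left hx hz)).trans_lt hy
  simp only [mem_iff]
  intro u hu v hv
  exact (le_total (f u - a).val (f v - a).val).imp
    (fun h ↦ preimage_mono (subset_of_mem h hv)) (fun h ↦ preimage_mono (subset_of_mem h hu))

lemma ArcConnected.mem_circArc_start_iff (hS : ArcConnected f S) (hf : f.Surjective)
    {a : ZMod n} (ha : a ∈ f '' S) (ha' : a - 1 ∉ f '' S) (hv : v ∈ S) :
    f u ∈ CircArc n a (f v) ↔ VertexArc f u v ⊆ S := by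
  obtain ⟨s, hs, rfl⟩ := ha
  obtain ⟨t, ht⟩ := hf (f s - 1)
  have not_subset {x y : V} (hx : f x ∉ CircArc n (f s) (f y)) : ¬ VertexArc f x y ⊆ S := by
    refine fun h ↦ ha' ⟨t, h ?_, ht⟩
    simpa only [VertexArc, mem_preimage, ht] using sub_one_mem_circArc hx
  refine ⟨fun hu ↦ ?_, not_imp_not.1 not_subset⟩
  have hsv : VertexArc f s v ⊆ S := by
    by_cases hvs : f v ∈ CircArc n (f s) (f s)
    · have : f v = f s := by simpa [mem_circArc, sub_eq_zero] using hvs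
      simpa [VertexArc, this] using hS s hs v hv
    · exact (hS s hs v hv).resolve_right (not_subset hvs)
  exact (preimage_mono (circArc_subset_circArc_left hu)).trans hsv

lemma ArcConnected.mem_circArc_end_iff (hS : ArcConnected f S) (hf : f.Surjective)
    {b : ZMod n} (hb : b ∈ f '' S) (hb' : b + 1 ∉ f '' S) (hu : u ∈ S) :
    f v ∈ CircArc n (f u) b ↔ VertexArc f u v ⊆ S := by
  have hneg : (-f).Surjective := neg_surjective.comp hf
  have mem_neg (c : ZMod n) : -c ∈ (-f) '' S ↔ c ∈ f '' S := by simp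
  rw [← vertexArc_neg, ← hS.neg.mem_circArc_start_iff hneg ((mem_neg b).2 hb) ?_ hu]
  · exact neg_mem_circArc_neg.symm
  · rwa [← neg_add', mem_neg]

end ArcConnected

section Graph

variable {V : Type*} {G : SimpleGraph V} {u v w : V}

lemma mem_closedNbhd_self (G : SimpleGraph V) (v : V) : v ∈ ClosedNbhd G v :=
  Or.inl rfl

lemma mem_closedNbhd_comm : u ∈ ClosedNbhd G v ↔ v ∈ ClosedNbhd G u :=
  or_congr eq_comm (G.adj_comm u v)

lemma nonempty_of_not_isBipartite (hG : ¬ IsBipartite G) : Nonempty V := by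
  by_contra h
  rw [not_nonempty_iff] at h
  exact hG ⟨∅, fun u ↦ h.elim u, fun u ↦ h.elim u⟩

lemma isBipartite_compl_of_isClique {A B : Set V} (hA : G.IsClique A) (hB : G.IsClique B)
    (hAB : ∀ v, v ∈ A ∨ v ∈ B) : IsBipartite Gᶜ := by
  have not_adj {S : Set V} (hS : G.IsClique S) {u v : V} (hu : u ∈ S) (hv : v ∈ S) :
      ¬ Gᶜ.Adj u v := fun h ↦ h.2 (hS hu hv h.1)
  exact ⟨A, fun u hu v hv ↦ not_adj hA hu hv,
    fun u hu v hv ↦ not_adj hB ((hAB u).resolve_left hu) ((hAB v).resolve_left hv)⟩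

variable {n : ℕ} {f : V → ZMod n}

lemma isClique_of_forall_mem_vertexArc {S : Set V} (f : V → ZMod n) (o : V)
    (h : ∀ u ∈ S, ∀ v ∈ S, u ∈ VertexArc f o v → u ∈ ClosedNbhd G v) : G.IsClique S := by
  intro u hu v hv huv
  have huv' : u ∈ ClosedNbhd G v :=
    (mem_vertexArc_or_mem_vertexArc f u o v).elim (h u hu v hv)
      (fun hvu ↦ mem_closedNbhd_comm.1 (h v hv u hu hvu))
  exact huv'.resolve_left huv

/-- `f` is an arc ordering of the closed neighborhoods of `G`, where arcs are understood in the
sense of `ArcConnected`. -/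
def IsArcOrdering (G : SimpleGraph V) (f : V → ZMod n) : Prop :=
  ∀ v, ArcConnected f (ClosedNbhd G v)

/-- The set `N⁻[v]`, described by the arc `[u, v]` instead of the start point of `N[v]`. -/
def InNbhd (G : SimpleGraph V) (f : V → ZMod n) (v : V) : Set V :=
  {u | VertexArc f u v ⊆ ClosedNbhd G v}

/-- The set `N⁺[v]`, described by the arc `[v, u]` instead of the end point of `N[v]`. -/
def OutNbhd (G : SimpleGraph V) (f : V → ZMod n) (v : V) : Set V :=
  {u | VertexArc f v u ⊆ ClosedNbhd G v}

/-- One of the two cliques that cover `G` when `u ∈ N⁻[v]` and `v ∈ N⁻[u]`; the other one is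
`CoveringClique G f v u`. -/
def CoveringClique (G : SimpleGraph V) (f : V → ZMod n) (u v : V) : Set V :=
  {w | f w ∈ CircIco n (f u) (f v) ∧ VertexArc f v w ⊆ ClosedNbhd G w} ∪
    {w | f w ∈ CircIco n (f v) (f u) ∧ VertexArc f w u ⊆ ClosedNbhd G w}

lemma mem_closedNbhd_of_mem_inNbhd (h : u ∈ InNbhd G f v) : u ∈ ClosedNbhd G v :=
  h left_mem_vertexArc

lemma mem_closedNbhd_of_mem_outNbhd (h : u ∈ OutNbhd G f v) : u ∈ ClosedNbhd G v :=
  h right_mem_vertexArc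

variable [NeZero n]

lemma inNbhd_neg (G : SimpleGraph V) (f : V → ZMod n) (v : V) :
    InNbhd G (-f) v = OutNbhd G f v := by
  simp only [InNbhd, OutNbhd, vertexArc_neg]

lemma outNbhd_neg (G : SimpleGraph V) (f : V → ZMod n) (v : V) :
    OutNbhd G (-f) v = InNbhd G f v := by
  simp only [InNbhd, OutNbhd, vertexArc_neg]

lemma isClique_coveringClique (G : SimpleGraph V) (f : V → ZMod n) (u v : V) :
    G.IsClique (CoveringClique G f u v) := by
  have : Std.Symm G.Adj := G.symm
  refine Set.pairwise_union_of_symm.2 ⟨?_, ?_, ?_⟩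
  · refine isClique_of_forall_mem_vertexArc f u fun w _ z hz hwz ↦ hz.2 ?_
    exact circArc_subset_circArc_left (left_mem_circArc_of_mem_circIco hz.1) hwz
  · refine isClique_of_forall_mem_vertexArc f v fun w hw z hz hwz ↦
      mem_closedNbhd_comm.1 (hw.2 ?_)
    exact mem_circArc_of_mem_circArc_left (circIco_subset_circArc hz.1) hwz
  · intro w hw z hz hwz
    have huw : f u ∈ CircArc n (f v) (f w) := left_mem_circArc_of_mem_circIco hw.1
    have hzw : z ∈ VertexArc f v w :=
      circArc_subset_circArc_right huw (circIco_subset_circArc hz.1)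
    exact (mem_closedNbhd_comm.1 (hw.2 hzw)).resolve_left hwz

namespace IsArcOrdering

lemma neg (hf : IsArcOrdering G f) : IsArcOrdering G (-f) :=
  fun v ↦ (hf v).neg

lemma mem_coveringClique_or (hf : IsArcOrdering G f) (huv : f u ≠ f v) (hu : u ∈ InNbhd G f v)
    (hv : v ∈ InNbhd G f u) (w : V) :
    w ∈ CoveringClique G f u v ∨ w ∈ CoveringClique G f v u := by
  have mem_or {a b : V} (hab : a ∈ InNbhd G f b) (hw : f w ∈ CircIco n (f a) (f b)) :
      w ∈ CoveringClique G f a b ∨ w ∈ CoveringClique G f b a := by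
    have hbw : b ∈ ClosedNbhd G w := mem_closedNbhd_comm.1 (hab (circIco_subset_circArc hw))
    exact (hf w b hbw w (mem_closedNbhd_self G w)).imp (fun h ↦ .inl ⟨hw, h⟩) (fun h ↦ .inr ⟨hw, h⟩)
  exact (mem_circIco_or_mem_circIco huv (f w)).elim (mem_or hu) (fun hw ↦ (mem_or hv hw).symm)

lemma mem_outNbhd_of_mem_inNbhd (hf : IsArcOrdering G f) (hG : ¬ IsBipartite Gᶜ)
    (hu : u ∈ InNbhd G f v) : v ∈ OutNbhd G f u := by
  by_contra hv
  have hvu : v ∈ ClosedNbhd G u := mem_closedNbhd_comm.1 (mem_closedNbhd_of_mem_inNbhd hu)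
  have hv' : v ∈ InNbhd G f u := (hf u u (mem_closedNbhd_self G u) v hvu).resolve_left hv
  have huv : f u ≠ f v := by
    intro h
    refine hv fun w hw ↦ hv' ?_
    simpa only [VertexArc, h] using hw
  exact hG (isBipartite_compl_of_isClique (isClique_coveringClique G f u v)
    (isClique_coveringClique G f v u) (hf.mem_coveringClique_or huv hu hv'))

lemma mem_inNbhd_iff_mem_outNbhd (hf : IsArcOrdering G f) (hG : ¬ IsBipartite Gᶜ) :
    u ∈ InNbhd G f v ↔ v ∈ OutNbhd G f u := by
  refine ⟨hf.mem_outNbhd_of_mem_inNbhd hG, ?_⟩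
  simpa only [inNbhd_neg, outNbhd_neg] using hf.neg.mem_outNbhd_of_mem_inNbhd hG (u := v) (v := u)

lemma isClique_outNbhd (hf : IsArcOrdering G f) (hG : ¬ IsBipartite Gᶜ) (v : V) :
    G.IsClique (OutNbhd G f v) :=
  isClique_of_forall_mem_vertexArc f v fun _ _ _ hw huw ↦
    (hf.mem_inNbhd_iff_mem_outNbhd hG).2 hw huw

lemma isClique_inNbhd (hf : IsArcOrdering G f) (hG : ¬ IsBipartite Gᶜ) (v : V) :
    G.IsClique (InNbhd G f v) := by
  simpa only [outNbhd_neg] using hf.neg.isClique_outNbhd hG v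

end IsArcOrdering

end Graph

/-- Let `G` have non-bipartite complement, and let `f` be an arc
ordering of `N[G]`, with `lo v`, `hi v` the start and end points of the arc
`f(N[v])`. Define `N⁻[v]` and `N⁺[v]` via these endpoints. Then (1) `u ∈ N⁻[v]` iff
`v ∈ N⁺[u]`, and (2) both `N⁻[v]` and `N⁺[v]` are cliques. -/
theorem stmt12 {V : Type*} [Fintype V] (G : SimpleGraph V)
    (hnb : ¬ IsBipartite Gᶜ)
    (f : V ≃ ZMod (Fintype.card V))
    (harc : ∀ v, IsArc (Fintype.card V) (f '' ClosedNbhd G v))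
    (lo hi : V → ZMod (Fintype.card V))
    (hlo : ∀ v, lo v ∈ f '' ClosedNbhd G v ∧ lo v - 1 ∉ f '' ClosedNbhd G v)
    (hhi : ∀ v, hi v ∈ f '' ClosedNbhd G v ∧ hi v + 1 ∉ f '' ClosedNbhd G v) :
    (∀ u v, (u ∈ ClosedNbhd G v ∧ f u ∈ CircArc (Fintype.card V) (lo v) (f v)) ↔
            (v ∈ ClosedNbhd G u ∧ f v ∈ CircArc (Fintype.card V) (f u) (hi u))) ∧
    (∀ v, G.IsClique
        {u | u ∈ ClosedNbhd G v ∧ f u ∈ CircArc (Fintype.card V) (lo v) (f v)} ∧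
      G.IsClique
        {u | u ∈ ClosedNbhd G v ∧ f u ∈ CircArc (Fintype.card V) (f v) (hi v)}) := by
  have : Nonempty V := nonempty_of_not_isBipartite hnb
  have : NeZero (Fintype.card V) := ⟨Fintype.card_ne_zero⟩
  have hf : IsArcOrdering G f := fun v ↦ by
    simpa only [f.injective.preimage_image] using (harc v).arcConnected_preimage f
  have mem_in (u v : V) : (u ∈ ClosedNbhd G v ∧ f u ∈ CircArc _ (lo v) (f v)) ↔
      u ∈ InNbhd G f v := by
    rw [(hf v).mem_circArc_start_iff f.surjective (hlo v).1 (hlo v).2 (mem_closedNbhd_self G v)]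
    exact and_iff_right_of_imp mem_closedNbhd_of_mem_inNbhd
  have mem_out (u v : V) : (v ∈ ClosedNbhd G u ∧ f v ∈ CircArc _ (f u) (hi u)) ↔
      v ∈ OutNbhd G f u := by
    rw [(hf u).mem_circArc_end_iff f.surjective (hhi u).1 (hhi u).2 (mem_closedNbhd_self G u)]
    exact and_iff_right_of_imp mem_closedNbhd_of_mem_outNbhd
  simp only [mem_in, mem_out, ofPred_mem_eq]
  exact ⟨fun u v ↦ hf.mem_inNbhd_iff_mem_outNbhd hnb,
    fun v ↦ ⟨hf.isClique_inNbhd hnb v, hf.isClique_outNbhd hnb v⟩⟩
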